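/- arXiv:2206.06232 — 2 statements merged into one kernel-verified Lean document; each statement's English description precedes it below -/
import Mathlib

section
/- Let L : ℝ^d → ℝ be differentiable, β-smooth with β > 0, and μ-strongly convex with μ > 0, with global minimizer w* and L* = L(w*). Let γ > 0 and ρ > 0 satisfy γβ(1 + ρβ) ≤ 2, and define the full-batch SAM iterates w_{t+1} = w_t − γ∇L(w_t + ρ∇L(w_t)). Define the Lyapunov function V_t = L(w_t) − L* + ‖w_t − w*‖²/(2ρ). Then for every t ≥ 0, V_{t+1} ≤ (1 − γμ(2 − γβ(1 + ρβ)))·V_t. -/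
open scoped RealInnerProductSpace

/-!
Let `u = w + ρ ∇L(w)` be the ascent point of `w`. Scaling the Lyapunov function by `2ρ` makes the
two cross terms of a SAM step, `ρ⟪∇L(w), ∇L(u)⟫` from the descent lemma and `⟪∇L(u), w - w*⟫` from
expanding the squared distance, combine into `⟪∇L(u), u - w*⟫`. Cocoercivity of `∇L` lets this
inner product absorb the quadratic error `‖∇L(u)‖²`, and strong monotonicity bounds what remains
below by a multiple of `‖u - w*‖²`, which by convexity is at least `2ρV(w)`.
-/

open Set
open scoped NNReal

theorem hasDerivAt_comp_lineMap {E F : Type*} [NormedAddCommGroup E] [NormedSpace ℝ E]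
    [NormedAddCommGroup F] [NormedSpace ℝ F] {f : E → F} {f' : E →L[ℝ] F} {x y : E} {s : ℝ}
    (hf : HasFDerivAt f f' (AffineMap.lineMap x y s)) :
    HasDerivAt (f ∘ AffineMap.lineMap x y) (f' (y - x)) s :=
  hf.comp_hasDerivAt s AffineMap.hasDerivAt_lineMap

theorem add_fderiv_sub_le_of_convexOn {E : Type*} [NormedAddCommGroup E] [NormedSpace ℝ E]
    {s : Set E} {f : E → ℝ} {f' : E →L[ℝ] ℝ} {x y : E} (hconv : ConvexOn ℝ s f)
    (hx : x ∈ s) (hy : y ∈ s) (hf : HasFDerivAt f f' x) : f x + f' (y - x) ≤ f y := by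
  have hderiv : HasDerivAt (f ∘ AffineMap.lineMap x y) (f' (y - x)) (0 : ℝ) :=
    hasDerivAt_comp_lineMap (by rwa [AffineMap.lineMap_apply_zero])
  have hslope := (hconv.comp_affineMap (AffineMap.lineMap x y)).le_slope_of_hasDerivAt
    (x := (0 : ℝ)) (y := 1) (by simpa using hx) (by simpa using hy) zero_lt_one hderiv
  have : f' (y - x) ≤ f y - f x := by simpa [slope_def_field] using hslope
  linarith

section Gradient

variable {E : Type*} [NormedAddCommGroup E] [InnerProductSpace ℝ E] [CompleteSpace E]
  {f : E → ℝ} {g : E → E} {K : ℝ≥0} {m : ℝ}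

theorem eq_zero_of_hasGradientAt_of_isLocalMin {x v : E} (hf : HasGradientAt f v x)
    (hmin : IsLocalMin f x) : v = 0 := by
  simpa using hmin.hasFDerivAt_eq_zero hf.hasFDerivAt

theorem add_inner_gradient_sub_le_of_convexOn {s : Set E} {x y v : E} (hconv : ConvexOn ℝ s f)
    (hx : x ∈ s) (hy : y ∈ s) (hf : HasGradientAt f v x) : f x + ⟪v, y - x⟫ ≤ f y := by
  simpa using add_fderiv_sub_le_of_convexOn hconv hx hy hf.hasFDerivAt

theorem add_inner_gradient_sub_add_sq_le_of_strongConvexOn {s : Set E} {x y v : E}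
    (hconv : StrongConvexOn s m f) (hx : x ∈ s) (hy : y ∈ s) (hf : HasGradientAt f v x) :
    f x + ⟪v, y - x⟫ + m / 2 * ‖y - x‖ ^ 2 ≤ f y := by
  have htangent := add_fderiv_sub_le_of_convexOn (strongConvexOn_iff_convex.1 hconv) hx hy
    (hf.hasFDerivAt.sub ((hasStrictFDerivAt_norm_sq x).hasFDerivAt.const_mul (m / 2)))
  have hsq : ‖y‖ ^ 2 = ‖x‖ ^ 2 + 2 * ⟪x, y - x⟫ + ‖y - x‖ ^ 2 := by
    rw [← norm_add_sq_real, add_sub_cancel]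
  simp only [sub_apply, smul_apply, InnerProductSpace.toDual_apply_apply,
    innerSL_apply_apply, nsmul_eq_mul, smul_eq_mul, Nat.cast_ofNat] at htangent
  rw [hsq] at htangent
  linarith

theorem mul_norm_sub_sq_le_inner_gradient_sub {s : Set E} {x y v u : E}
    (hconv : StrongConvexOn s m f) (hx : x ∈ s) (hy : y ∈ s)
    (hfx : HasGradientAt f v x) (hfy : HasGradientAt f u y) :
    m * ‖x - y‖ ^ 2 ≤ ⟪v - u, x - y⟫ := by
  have hxy := add_inner_gradient_sub_add_sq_le_of_strongConvexOn hconv hx hy hfx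
  have hyx := add_inner_gradient_sub_add_sq_le_of_strongConvexOn hconv hy hx hfy
  rw [← neg_sub x y, inner_neg_right, norm_neg] at hxy
  rw [inner_sub_left]
  linarith

theorem le_add_inner_gradient_sub_add_sq_of_lipschitzWith (hf : ∀ x, HasGradientAt f (g x) x)
    (hg : LipschitzWith K g) (x y : E) :
    f y ≤ f x + ⟪g x, y - x⟫ + K / 2 * ‖y - x‖ ^ 2 := by
  have hderiv (s : ℝ) : HasDerivAt (f ∘ AffineMap.lineMap x y)
      ⟪g (AffineMap.lineMap x y s), y - x⟫ s := by
    simpa using hasDerivAt_comp_lineMap (hf (AffineMap.lineMap x y s)).hasFDerivAt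
  have hderiv_model (s : ℝ) : HasDerivAt
      (fun s : ℝ => f x + s * ⟪g x, y - x⟫ + s ^ 2 * (K / 2 * ‖y - x‖ ^ 2))
      (⟪g x, y - x⟫ + s * (K * ‖y - x‖ ^ 2)) s := by
    refine ((((hasDerivAt_id s).mul_const _).const_add (f x)).add
      ((hasDerivAt_pow 2 s).mul_const (K / 2 * ‖y - x‖ ^ 2))).congr_deriv ?_
    norm_num
    ring
  have hderiv_le (s : ℝ) (hs : 0 ≤ s) :
      ⟪g (AffineMap.lineMap x y s), y - x⟫ ≤ ⟪g x, y - x⟫ + s * (K * ‖y - x‖ ^ 2) := by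
    rw [← sub_le_iff_le_add', ← inner_sub_left]
    calc ⟪g (AffineMap.lineMap x y s) - g x, y - x⟫
        ≤ ‖g (AffineMap.lineMap x y s) - g x‖ * ‖y - x‖ := real_inner_le_norm _ _
      _ ≤ K * ‖AffineMap.lineMap x y s - x‖ * ‖y - x‖ := by
          gcongr
          exact hg.norm_sub_le _ _
      _ = s * (K * ‖y - x‖ ^ 2) := by
          rw [AffineMap.lineMap_apply_module', add_sub_cancel_right, norm_smul,
            Real.norm_of_nonneg hs]
          ring
  have hle := image_le_of_deriv_right_le_deriv_boundary (a := (0 : ℝ)) (b := 1)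
    (fun s _ => (hderiv s).continuousAt.continuousWithinAt)
    (fun s _ => (hderiv s).hasDerivWithinAt) (by simp)
    (fun s _ => (hderiv_model s).continuousAt.continuousWithinAt)
    (fun s _ => (hderiv_model s).hasDerivWithinAt)
    (fun s hs => hderiv_le s hs.1) (right_mem_Icc.2 zero_le_one)
  simpa using hle

theorem norm_gradient_sub_sq_le_mul_sub_sub_inner (hf : ∀ x, HasGradientAt f (g x) x)
    (hg : LipschitzWith K g) (hconv : ConvexOn ℝ univ f) (x y : E) :
    ‖g y - g x‖ ^ 2 ≤ 2 * K * (f y - f x - ⟪g x, y - x⟫) := by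
  rcases eq_or_ne K 0 with rfl | hK
  · have hconst : ‖g y - g x‖ ≤ 0 := by simpa using hg.norm_sub_le y x
    simp [norm_le_zero_iff.1 hconst]
  -- `z` minimizes the descent bound at `y` for `f - ⟪g x, ·⟫`, a function whose minimum is at `x`.
  set z : E := y - (K : ℝ)⁻¹ • (g y - g x) with hz
  have hlower := add_inner_gradient_sub_le_of_convexOn hconv (mem_univ x) (mem_univ z) (hf x)
  have hupper := le_add_inner_gradient_sub_add_sq_of_lipschitzWith hf hg y z
  have hzy : z - y = -((K : ℝ)⁻¹ • (g y - g x)) := by rw [hz]; abel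
  have hinner : ⟪g y, z - y⟫ - ⟪g x, z - y⟫ = -((K : ℝ)⁻¹ * ‖g y - g x‖ ^ 2) := by
    rw [← inner_sub_left, hzy, inner_neg_right, inner_smul_right, real_inner_self_eq_norm_sq]
  have hnorm : (K : ℝ) / 2 * ‖z - y‖ ^ 2 = (K : ℝ)⁻¹ * ‖g y - g x‖ ^ 2 / 2 := by
    rw [hzy, norm_neg, norm_smul, Real.norm_of_nonneg (by positivity)]
    field_simp
  have hsplit : ⟪g x, z - x⟫ = ⟪g x, z - y⟫ + ⟪g x, y - x⟫ := by
    rw [← inner_add_right, sub_add_sub_cancel]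
  have hgap : (K : ℝ)⁻¹ * ‖g y - g x‖ ^ 2 ≤ 2 * (f y - f x - ⟪g x, y - x⟫) := by linarith
  rw [inv_mul_le_iff₀ (by positivity)] at hgap
  linarith

/-- The Baillon–Haddad theorem. -/
theorem norm_gradient_sub_sq_le_mul_inner (hf : ∀ x, HasGradientAt f (g x) x)
    (hg : LipschitzWith K g) (hconv : ConvexOn ℝ univ f) (x y : E) :
    ‖g x - g y‖ ^ 2 ≤ K * ⟪g x - g y, x - y⟫ := by
  have hxy := norm_gradient_sub_sq_le_mul_sub_sub_inner hf hg hconv x y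
  have hyx := norm_gradient_sub_sq_le_mul_sub_sub_inner hf hg hconv y x
  rw [norm_sub_rev, ← neg_sub x y, inner_neg_right] at hxy
  rw [inner_sub_left]
  linarith

end Gradient

section SAM

variable {E : Type*} [NormedAddCommGroup E]

/-- The point `w + ρ∇L(w)` at which a SAM step evaluates the gradient; `g` stands for `∇L`. -/
def samAscent [NormedSpace ℝ E] (g : E → E) (ρ : ℝ) (w : E) : E :=
  w + ρ • g w

/-- The full-batch SAM step with step size `γ` and ascent radius `ρ`; `g` stands for `∇L`. -/
def samStep [NormedSpace ℝ E] (g : E → E) (γ ρ : ℝ) (w : E) : E :=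
  w - γ • g (samAscent g ρ w)

/-- The Lyapunov function `V` of SAM relative to a reference point `z`, which in the contraction
theorem is the minimizer `w*`. It is meaningful only for `ρ ≠ 0`, since `x / 0 = 0`. -/
noncomputable def samLyapunov (L : E → ℝ) (z : E) (ρ : ℝ) (w : E) : ℝ :=
  L w - L z + ‖w - z‖ ^ 2 / (2 * ρ)

variable {L : E → ℝ} {g : E → E} {β : ℝ≥0} {μ γ ρ : ℝ}

theorem two_mul_mul_samLyapunov (hρ : ρ ≠ 0) (z w : E) :
    2 * ρ * samLyapunov L z ρ w = 2 * ρ * (L w - L z) + ‖w - z‖ ^ 2 := by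
  unfold samLyapunov
  field_simp

variable [InnerProductSpace ℝ E] [CompleteSpace E]

theorem two_mul_mul_samLyapunov_le_norm_samAscent_sub_sq {w : E}
    (hgrad : HasGradientAt L (g w) w) (hconv : ConvexOn ℝ univ L) (hρ : 0 < ρ) (z : E) :
    2 * ρ * samLyapunov L z ρ w ≤ ‖samAscent g ρ w - z‖ ^ 2 := by
  have htangent : L w - L z ≤ ⟪g w, w - z⟫ := by
    have := add_inner_gradient_sub_le_of_convexOn hconv (mem_univ w) (mem_univ z) hgrad
    rw [← neg_sub w z, inner_neg_right] at this
    linarith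
  calc 2 * ρ * samLyapunov L z ρ w
      = 2 * ρ * (L w - L z) + ‖w - z‖ ^ 2 := two_mul_mul_samLyapunov hρ.ne' z w
    _ ≤ 2 * ρ * ⟪g w, w - z⟫ + ‖w - z‖ ^ 2 + ‖ρ • g w‖ ^ 2 := by
        have := mul_le_mul_of_nonneg_left htangent (by positivity : 0 ≤ 2 * ρ)
        linarith [sq_nonneg ‖ρ • g w‖]
    _ = ‖samAscent g ρ w - z‖ ^ 2 := by
        rw [samAscent, add_sub_right_comm, norm_add_sq_real, inner_smul_right, real_inner_comm]
        ring

theorem two_mul_mul_samLyapunov_samStep_le (hgrad : ∀ x, HasGradientAt L (g x) x)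
    (hLip : LipschitzWith β g) (hρ : 0 < ρ) (z w : E) :
    2 * ρ * samLyapunov L z ρ (samStep g γ ρ w) ≤
      2 * ρ * samLyapunov L z ρ w - 2 * γ * ⟪g (samAscent g ρ w), samAscent g ρ w - z⟫ +
        γ ^ 2 * (1 + ρ * β) * ‖g (samAscent g ρ w)‖ ^ 2 := by
  rw [two_mul_mul_samLyapunov hρ.ne', two_mul_mul_samLyapunov hρ.ne', samStep]
  set h := g (samAscent g ρ w)
  have hdescent : L (w - γ • h) ≤ L w - γ * ⟪g w, h⟫ + β / 2 * (γ ^ 2 * ‖h‖ ^ 2) := by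
    simpa [inner_smul_right, norm_smul, mul_pow, sub_eq_add_neg] using
      le_add_inner_gradient_sub_add_sq_of_lipschitzWith hgrad hLip w (w - γ • h)
  have hdist : ‖w - γ • h - z‖ ^ 2 = ‖w - z‖ ^ 2 - 2 * γ * ⟪h, w - z⟫ + γ ^ 2 * ‖h‖ ^ 2 := by
    rw [sub_right_comm, norm_sub_sq_real, inner_smul_right, real_inner_comm, norm_smul, mul_pow,
      Real.norm_eq_abs, sq_abs]
    ring
  have hcross : ⟪h, samAscent g ρ w - z⟫ = ⟪h, w - z⟫ + ρ * ⟪g w, h⟫ := by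
    rw [samAscent, add_sub_right_comm, inner_add_right, inner_smul_right, real_inner_comm h]
  have := mul_le_mul_of_nonneg_left hdescent (by positivity : 0 ≤ 2 * ρ)
  rw [hdist, hcross]
  linarith

theorem sam_fullbatch_lyapunov_strongly_convex_general (hgrad : ∀ x, HasGradientAt L (g x) x)
    (hLip : LipschitzWith β g) (hμ : 0 ≤ μ) (hconv : StrongConvexOn univ μ L)
    {wstar : E} (hmin : ∀ v, L wstar ≤ L v) (hγ : 0 ≤ γ) (hρ : 0 < ρ)
    (hstep : γ * β * (1 + ρ * β) ≤ 2) (w : E) :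
    samLyapunov L wstar ρ (samStep g γ ρ w) ≤
      (1 - γ * μ * (2 - γ * β * (1 + ρ * β))) * samLyapunov L wstar ρ w := by
  have hconv₀ : ConvexOn ℝ univ L := strongConvexOn_zero.1 (hconv.mono hμ)
  have hstar : g wstar = 0 :=
    eq_zero_of_hasGradientAt_of_isLocalMin (hgrad wstar) (Filter.Eventually.of_forall hmin)
  set V := samLyapunov L wstar ρ w
  set u := samAscent g ρ w
  set κ := 2 - γ * β * (1 + ρ * β) with hκ
  have hγκ : 0 ≤ γ * κ := mul_nonneg hγ (sub_nonneg.2 hstep)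
  have hcoco : ‖g u‖ ^ 2 ≤ β * ⟪g u, u - wstar⟫ := by
    simpa [hstar] using norm_gradient_sub_sq_le_mul_inner hgrad hLip hconv₀ u wstar
  have hmono : μ * ‖u - wstar‖ ^ 2 ≤ ⟪g u, u - wstar⟫ := by
    simpa [hstar] using mul_norm_sub_sq_le_inner_gradient_sub hconv (mem_univ u) (mem_univ wstar)
      (hgrad u) (hgrad wstar)
  have hV : 2 * ρ * V ≤ ‖u - wstar‖ ^ 2 :=
    two_mul_mul_samLyapunov_le_norm_samAscent_sub_sq (hgrad w) hconv₀ hρ wstar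
  refine le_of_mul_le_mul_left ?_ (by positivity : 0 < 2 * ρ)
  calc 2 * ρ * samLyapunov L wstar ρ (samStep g γ ρ w)
      ≤ 2 * ρ * V - 2 * γ * ⟪g u, u - wstar⟫ + γ ^ 2 * (1 + ρ * β) * ‖g u‖ ^ 2 :=
        two_mul_mul_samLyapunov_samStep_le hgrad hLip hρ wstar w
    _ ≤ 2 * ρ * V - 2 * γ * ⟪g u, u - wstar⟫ +
          γ ^ 2 * (1 + ρ * β) * (β * ⟪g u, u - wstar⟫) := by gcongr
    _ = 2 * ρ * V - γ * κ * ⟪g u, u - wstar⟫ := by rw [hκ]; ring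
    _ ≤ 2 * ρ * V - γ * κ * (μ * (2 * ρ * V)) :=
        sub_le_sub_left (mul_le_mul_of_nonneg_left
          ((mul_le_mul_of_nonneg_left hV hμ).trans hmono) hγκ) _
    _ = 2 * ρ * ((1 - γ * μ * κ) * V) := by ring

end SAM

/-- Lyapunov contraction for full-batch SAM on `β`-smooth, `μ`-strongly
convex functions (`β, μ > 0`) with global minimizer `w*`: if `γ, ρ > 0` satisfy
`γβ(1 + ρβ) ≤ 2` and `w_{t+1} = w_t − γ∇L(w_t + ρ∇L(w_t))`, then with
`V_t = L(w_t) − L* + ‖w_t − w*‖²/(2ρ)` one has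
`V_{t+1} ≤ (1 − γμ(2 − γβ(1 + ρβ)))·V_t` for every `t`. -/
theorem sam_fullbatch_lyapunov_strongly_convex {d : ℕ}
    (L : EuclideanSpace ℝ (Fin d) → ℝ)
    (g : EuclideanSpace ℝ (Fin d) → EuclideanSpace ℝ (Fin d))
    (hg : ∀ x, HasGradientAt L (g x) x)
    (β : ℝ) (hβ : 0 < β) (hLip : LipschitzWith β.toNNReal g)
    (μ : ℝ) (hμ : 0 < μ)
    (hconv : ConvexOn ℝ Set.univ (fun v => L v - μ / 2 * ‖v‖ ^ 2))
    (wstar : EuclideanSpace ℝ (Fin d)) (hmin : ∀ v, L wstar ≤ L v)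
    (γ ρ : ℝ) (hγ : 0 < γ) (hρ : 0 < ρ)
    (hstep : γ * β * (1 + ρ * β) ≤ 2)
    (w : ℕ → EuclideanSpace ℝ (Fin d))
    (hrec : ∀ t : ℕ, w (t + 1) = w t - γ • g (w t + ρ • g (w t)))
    (t : ℕ) :
    L (w (t + 1)) - L wstar + ‖w (t + 1) - wstar‖ ^ 2 / (2 * ρ) ≤
      (1 - γ * μ * (2 - γ * β * (1 + ρ * β))) *
        (L (w t) - L wstar + ‖w t - wstar‖ ^ 2 / (2 * ρ)) := by
  have hcoe : (β.toNNReal : ℝ) = β := Real.coe_toNNReal β hβ.le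
  rw [hrec t]
  simpa only [hcoe, samLyapunov, samStep, samAscent] using
    sam_fullbatch_lyapunov_strongly_convex_general hg hLip hμ.le
      (strongConvexOn_iff_convex.2 hconv) hmin hγ.le hρ (by rwa [hcoe]) (w t)
end

section
/- Assume each ℓ_i is differentiable with β-Lipschitz gradient (individual β-smoothness, β > 0) and the bounded variance condition (A1) holds with constant σ ≥ 0. Fix a batch size b ≥ 1, a point w ∈ ℝ^d, and ρ ≥ 0. Then, averaging uniformly over all batches J ∈ {1,…,n}^b, E_J⟨∇L_J(w + ρ∇L_J(w)), ∇L(w)⟩ ≥ (1/2 − ρβ)·‖∇L(w)‖² − β²ρ²σ²/(2b). -/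
open scoped RealInnerProductSpace

/-- The full (training) loss `L(w) = (1/n) ∑ᵢ ℓᵢ(w)`. -/
noncomputable def fullLoss {d n : ℕ} (ℓ : Fin n → EuclideanSpace ℝ (Fin d) → ℝ)
    (w : EuclideanSpace ℝ (Fin d)) : ℝ :=
  (n : ℝ)⁻¹ * ∑ i, ℓ i w

/-- The full gradient `∇L(w) = (1/n) ∑ᵢ ∇ℓᵢ(w)` (given per-example gradients `g i`). -/
noncomputable def fullGrad {d n : ℕ}
    (g : Fin n → EuclideanSpace ℝ (Fin d) → EuclideanSpace ℝ (Fin d))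
    (w : EuclideanSpace ℝ (Fin d)) : EuclideanSpace ℝ (Fin d) :=
  (n : ℝ)⁻¹ • ∑ i, g i w

/-- The mini-batch gradient `∇L_J(w) = (1/b) ∑_{k<b} ∇ℓ_{J k}(w)` for a batch
`J : Fin b → Fin n` (sampling with replacement). -/
noncomputable def batchGrad {d n b : ℕ}
    (g : Fin n → EuclideanSpace ℝ (Fin d) → EuclideanSpace ℝ (Fin d))
    (J : Fin b → Fin n) (w : EuclideanSpace ℝ (Fin d)) : EuclideanSpace ℝ (Fin d) :=
  (b : ℝ)⁻¹ • ∑ k, g (J k) w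

/-!
Write `G` for the full gradient at `w` and `V` for the mini-batch gradient at `w`. Moving the
evaluation point from `w` to `w + ρ G` changes the mini-batch gradient by at most `βρ‖G‖`, and from
there to `w + ρ V` by at most `βρ‖V - G‖`. The first error costs `ρβ‖G‖²` in the inner product with
`G`; the second costs at most `‖G‖² / 2 + β²ρ²‖V - G‖² / 2` by Young's inequality. Averaging over
the batches, `V - G` has mean zero and mean square `1 / b` times the single-sample variance.
-/

open Finset Function
open scoped BigOperators NNReal

section Expect

variable {ι E : Type*}

theorem inner_expect [SeminormedAddCommGroup E] [InnerProductSpace ℝ E] [Module ℚ≥0 E]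
    (s : Finset ι) (f : ι → E) (x : E) : ⟪x, 𝔼 i ∈ s, f i⟫ = 𝔼 i ∈ s, ⟪x, f i⟫ := by
  simp [expect, inner_sum, inner_smul_right, ← NNRat.cast_smul_eq_nnqsmul ℝ]

theorem expect_inner [SeminormedAddCommGroup E] [InnerProductSpace ℝ E] [Module ℚ≥0 E]
    (s : Finset ι) (f : ι → E) (x : E) : ⟪𝔼 i ∈ s, f i, x⟫ = 𝔼 i ∈ s, ⟪f i, x⟫ := by
  simp only [real_inner_comm x, inner_expect]

theorem expect_eq_real_smul_sum [AddCommGroup E] [Module ℝ E] [Module ℚ≥0 E]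
    (s : Finset ι) (f : ι → E) : 𝔼 i ∈ s, f i = (#s : ℝ)⁻¹ • ∑ i ∈ s, f i := by
  simp [expect, ← NNRat.cast_smul_eq_nnqsmul ℝ]

theorem norm_expect_le [SeminormedAddCommGroup E] [NormedSpace ℝ E] [Module ℚ≥0 E]
    (s : Finset ι) (f : ι → E) : ‖𝔼 i ∈ s, f i‖ ≤ 𝔼 i ∈ s, ‖f i‖ :=
  le_expect_of_subadditive norm_zero norm_add_le fun n x ↦ by
    simp [← NNRat.cast_smul_eq_nnqsmul ℝ, norm_smul]

theorem lipschitzWith_expect {α : Type*} [PseudoMetricSpace α] [SeminormedAddCommGroup E]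
    [NormedSpace ℝ E] [Module ℚ≥0 E] {K : ℝ≥0} {s : Finset ι} {f : ι → α → E}
    (hf : ∀ i ∈ s, LipschitzWith K (f i)) : LipschitzWith K fun x ↦ 𝔼 i ∈ s, f i x := by
  refine LipschitzWith.of_dist_le_mul fun x y ↦ ?_
  obtain rfl | hs := s.eq_empty_or_nonempty
  · simpa using mul_nonneg K.coe_nonneg dist_nonneg
  calc dist (𝔼 i ∈ s, f i x) (𝔼 i ∈ s, f i y)
      = ‖𝔼 i ∈ s, (f i x - f i y)‖ := by rw [dist_eq_norm, expect_sub_distrib]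
    _ ≤ 𝔼 i ∈ s, ‖f i x - f i y‖ := norm_expect_le s _
    _ ≤ K * dist x y := expect_le hs fun i hi ↦ by
      simpa only [dist_eq_norm] using (hf i hi).dist_le_mul x y

end Expect

section IndependentSampling

variable {κ : Type*} [Fintype κ] [DecidableEq κ] {α : κ → Type*} [∀ k, Fintype (α k)]
  [∀ k, Nonempty (α k)]

theorem expect_expect_update {M : Type*} [AddCommMonoid M] [Module ℚ≥0 M] (k : κ)
    (Φ : (∀ k, α k) → M) :
    𝔼 J, 𝔼 i, Φ (update J k i) = 𝔼 J, Φ J := by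
  -- Exchanging the `k`-th coordinate with the fresh sample is an involution.
  have hswap : Involutive fun p : (∀ k, α k) × α k ↦ (update p.1 k p.2, p.1 k) :=
    fun p ↦ by simp
  calc 𝔼 J, 𝔼 i, Φ (update J k i)
      = 𝔼 p : (∀ k, α k) × α k, Φ (update p.1 k p.2) := by
        rw [← univ_product_univ, expect_product]
    _ = 𝔼 p : (∀ k, α k) × α k, Φ p.1 :=
        Fintype.expect_bijective _ hswap.bijective _ _ fun _ ↦ rfl
    _ = 𝔼 J, Φ J := by
        rw [← univ_product_univ, expect_product]
        simp only [Fintype.expect_const]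

theorem expect_pi_eval {M : Type*} [AddCommMonoid M] [Module ℚ≥0 M] (k : κ) (f : α k → M) :
    𝔼 J : ∀ k, α k, f (J k) = 𝔼 i, f i := by
  rw [← expect_expect_update k]
  simp only [update_self, Fintype.expect_const]

variable {E : Type*} [SeminormedAddCommGroup E] [InnerProductSpace ℝ E] [Module ℚ≥0 E]

theorem expect_pi_inner_eval_eq_zero {k l : κ} (hkl : l ≠ k) {f : α k → E} (hf : 𝔼 i, f i = 0)
    (g : α l → E) : 𝔼 J : ∀ k, α k, ⟪f (J k), g (J l)⟫ = 0 := by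
  rw [← expect_expect_update k]
  simp only [update_self, update_of_ne hkl, ← expect_inner, hf, inner_zero_left, expect_const_zero]

theorem expect_pi_norm_sq_sum {f : ∀ k, α k → E} (hf : ∀ k, 𝔼 i, f k i = 0) :
    𝔼 J : ∀ k, α k, ‖∑ k, f k (J k)‖ ^ 2 = ∑ k, 𝔼 i, ‖f k i‖ ^ 2 := by
  calc 𝔼 J : ∀ k, α k, ‖∑ k, f k (J k)‖ ^ 2
      = ∑ k, ∑ l, 𝔼 J : ∀ k, α k, ⟪f l (J l), f k (J k)⟫ := by
        simp only [← real_inner_self_eq_norm_sq, sum_inner, inner_sum, expect_sum_comm]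
    _ = ∑ k, 𝔼 J : ∀ k, α k, ⟪f k (J k), f k (J k)⟫ := by
        refine sum_congr rfl fun k _ ↦ Fintype.sum_eq_single k fun l hlk ↦ ?_
        exact expect_pi_inner_eval_eq_zero hlk.symm (hf l) (f k)
    _ = ∑ k, 𝔼 i, ‖f k i‖ ^ 2 := by
        refine sum_congr rfl fun k _ ↦ ?_
        simp only [real_inner_self_eq_norm_sq]
        exact expect_pi_eval k fun i ↦ ‖f k i‖ ^ 2

end IndependentSampling

section SampleMean

variable {ι κ : Type*} [Fintype ι] [Nonempty ι] [Fintype κ] [Nonempty κ] [DecidableEq κ]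

theorem expect_sampleMean {M : Type*} [AddCommMonoid M] [Module ℚ≥0 M] (f : ι → M) :
    𝔼 J : κ → ι, 𝔼 k, f (J k) = 𝔼 i, f i := by
  rw [expect_comm]
  simp only [expect_pi_eval (α := fun _ : κ ↦ ι) _ f, Fintype.expect_const]

theorem expect_norm_sq_sampleMean_sub {E : Type*} [SeminormedAddCommGroup E]
    [InnerProductSpace ℝ E] [Module ℚ≥0 E] (f : ι → E) :
    𝔼 J : κ → ι, ‖𝔼 k, f (J k) - 𝔼 i, f i‖ ^ 2 =
      (𝔼 i, ‖f i - 𝔼 j, f j‖ ^ 2) / Fintype.card κ := by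
  set μ := 𝔼 i, f i with hμ
  have hcentered : 𝔼 i, (f i - μ) = 0 := by
    rw [expect_sub_distrib, Fintype.expect_const, hμ, sub_self]
  have hdeviation (J : κ → ι) :
      𝔼 k, f (J k) - μ = (Fintype.card κ : ℝ)⁻¹ • ∑ k, (f (J k) - μ) := by
    rw [← card_univ, ← expect_eq_real_smul_sum, expect_sub_distrib, Fintype.expect_const]
  have hsum : 𝔼 J : κ → ι, ‖∑ k, (f (J k) - μ)‖ ^ 2 =
      Fintype.card κ * 𝔼 i, ‖f i - μ‖ ^ 2 := by
    simpa using expect_pi_norm_sq_sum (fun _ : κ ↦ hcentered)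
  simp only [hdeviation, norm_smul, mul_pow, ← mul_expect, hsum, norm_inv, RCLike.norm_natCast]
  field_simp

end SampleMean

theorem le_inner_apply_add_smul_apply {E : Type*} [SeminormedAddCommGroup E]
    [InnerProductSpace ℝ E] {F : E → E} {K : ℝ≥0} (hF : LipschitzWith K F) {ρ : ℝ} (hρ : 0 ≤ ρ)
    (x u : E) :
    (1 / 2 - ρ * K) * ‖u‖ ^ 2 + ⟪F x - u, u⟫ - (ρ * K) ^ 2 / 2 * ‖F x - u‖ ^ 2 ≤
      ⟪F (x + ρ • F x), u⟫ := by
  have hstep : ‖F (x + ρ • u) - F x‖ ≤ ρ * K * ‖u‖ := by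
    simpa [norm_smul, abs_of_nonneg hρ, mul_comm, mul_assoc, mul_left_comm] using
      hF.norm_sub_le (x + ρ • u) x
  have hnoise : ‖F (x + ρ • F x) - F (x + ρ • u)‖ ≤ ρ * K * ‖F x - u‖ := by
    simpa [← smul_sub, norm_smul, abs_of_nonneg hρ, mul_comm, mul_assoc, mul_left_comm] using
      hF.norm_sub_le (x + ρ • F x) (x + ρ • u)
  have hstep_inner : -(ρ * K * ‖u‖ ^ 2) ≤ ⟪F (x + ρ • u) - F x, u⟫ := by
    calc -(ρ * K * ‖u‖ ^ 2) = -(ρ * K * ‖u‖ * ‖u‖) := by ring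
      _ ≤ -(‖F (x + ρ • u) - F x‖ * ‖u‖) := by gcongr
      _ ≤ _ := neg_le_of_abs_le (abs_real_inner_le_norm _ _)
  have hnoise_inner : -((ρ * K) ^ 2 / 2 * ‖F x - u‖ ^ 2 + ‖u‖ ^ 2 / 2) ≤
      ⟪F (x + ρ • F x) - F (x + ρ • u), u⟫ := by
    calc -((ρ * K) ^ 2 / 2 * ‖F x - u‖ ^ 2 + ‖u‖ ^ 2 / 2)
        ≤ -(ρ * K * ‖F x - u‖ * ‖u‖) := by linarith [two_mul_le_add_sq (ρ * K * ‖F x - u‖) ‖u‖]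
      _ ≤ -(‖F (x + ρ • F x) - F (x + ρ • u)‖ * ‖u‖) := by gcongr
      _ ≤ _ := neg_le_of_abs_le (abs_real_inner_le_norm _ _)
  have hsplit : ⟪F (x + ρ • F x), u⟫ = ⟪F (x + ρ • F x) - F (x + ρ • u), u⟫ +
      ⟪F (x + ρ • u) - F x, u⟫ + ⟪F x - u, u⟫ + ‖u‖ ^ 2 := by
    simp only [inner_sub_left, real_inner_self_eq_norm_sq]
    ring
  linarith

theorem msam_stochastic_alignment_general {E ι κ : Type*} [NormedAddCommGroup E]
    [InnerProductSpace ℝ E] [CompleteSpace E] [Module ℚ≥0 E] [Fintype ι] [Nonempty ι]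
    [Fintype κ] [Nonempty κ] [DecidableEq κ] (ℓ : ι → E → ℝ) (g : ι → E → E)
    (hg : ∀ i x, HasGradientAt (ℓ i) (g i x) x) {β : ℝ≥0} (hLip : ∀ i, LipschitzWith β (g i))
    {σ : ℝ} {w : E} (hvar : 𝔼 i, ‖g i w - 𝔼 j, g j w‖ ^ 2 ≤ σ ^ 2) {ρ : ℝ} (hρ : 0 ≤ ρ) :
    (1 / 2 - ρ * β) * ‖𝔼 i, g i w‖ ^ 2 - β ^ 2 * ρ ^ 2 * σ ^ 2 / (2 * Fintype.card κ) ≤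
      𝔼 J : κ → ι, ⟪𝔼 k, g (J k) (w + ρ • 𝔼 l, g (J l) w), 𝔼 i, g i w⟫ := by
  set G := 𝔼 i, g i w
  have hmean : 𝔼 J : κ → ι, ⟪𝔼 k, g (J k) w - G, G⟫ = 0 := by
    rw [← expect_inner, expect_sub_distrib, expect_sampleMean fun i ↦ g i w,
      Fintype.expect_const, sub_self, inner_zero_left]
  calc (1 / 2 - ρ * β) * ‖G‖ ^ 2 - β ^ 2 * ρ ^ 2 * σ ^ 2 / (2 * Fintype.card κ)
      = (1 / 2 - ρ * β) * ‖G‖ ^ 2 - (ρ * β) ^ 2 / 2 * (σ ^ 2 / Fintype.card κ) := by ring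
    _ ≤ (1 / 2 - ρ * β) * ‖G‖ ^ 2 -
          (ρ * β) ^ 2 / 2 * ((𝔼 i, ‖g i w - G‖ ^ 2) / Fintype.card κ) := by gcongr
    _ = 𝔼 J : κ → ι, ((1 / 2 - ρ * β) * ‖G‖ ^ 2 + ⟪𝔼 k, g (J k) w - G, G⟫ -
          (ρ * β) ^ 2 / 2 * ‖𝔼 k, g (J k) w - G‖ ^ 2) := by
        rw [expect_sub_distrib, expect_add_distrib, Fintype.expect_const, hmean, add_zero,
          ← mul_expect, expect_norm_sq_sampleMean_sub fun i ↦ g i w]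
    _ ≤ _ := expect_le_expect fun J _ ↦
        le_inner_apply_add_smul_apply (lipschitzWith_expect fun k _ ↦ hLip (J k)) hρ w G

theorem fullGrad_eq_expect {d n : ℕ}
    (g : Fin n → EuclideanSpace ℝ (Fin d) → EuclideanSpace ℝ (Fin d))
    (w : EuclideanSpace ℝ (Fin d)) : fullGrad g w = 𝔼 i, g i w := by
  rw [fullGrad, expect_eq_real_smul_sum, card_fin]

theorem batchGrad_eq_expect {d n b : ℕ}
    (g : Fin n → EuclideanSpace ℝ (Fin d) → EuclideanSpace ℝ (Fin d)) (J : Fin b → Fin n)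
    (w : EuclideanSpace ℝ (Fin d)) : batchGrad g J w = 𝔼 k, g (J k) w := by
  rw [batchGrad, expect_eq_real_smul_sum, card_fin]

/-- Alignment of the stochastic m-SAM direction (the *same* batch `J` used
for ascent and descent) with the full gradient: under individual `β`-smoothness of each
`ℓᵢ` and bounded variance (A1), for every `w` and `ρ ≥ 0`, averaging uniformly over all
batches `J ∈ {1,…,n}^b`,
`E_J⟨∇L_J(w + ρ∇L_J(w)), ∇L(w)⟩ ≥ (1/2 − ρβ)‖∇L(w)‖² − β²ρ²σ²/(2b)`. -/
theorem msam_stochastic_alignment {d n b : ℕ} (hn : 0 < n) (hb : 1 ≤ b)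
    (ℓ : Fin n → EuclideanSpace ℝ (Fin d) → ℝ)
    (g : Fin n → EuclideanSpace ℝ (Fin d) → EuclideanSpace ℝ (Fin d))
    (hg : ∀ i x, HasGradientAt (ℓ i) (g i x) x)
    (β : ℝ) (hβ : 0 < β) (hLip : ∀ i, LipschitzWith β.toNNReal (g i))
    (σ : ℝ) (hσ : 0 ≤ σ)
    (hvar : ∀ x, (n : ℝ)⁻¹ * ∑ i, ‖g i x - fullGrad g x‖ ^ 2 ≤ σ ^ 2)
    (w : EuclideanSpace ℝ (Fin d)) (ρ : ℝ) (hρ : 0 ≤ ρ) :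
    (1 / 2 - ρ * β) * ‖fullGrad g w‖ ^ 2 - β ^ 2 * ρ ^ 2 * σ ^ 2 / (2 * b) ≤
      ((n : ℝ) ^ b)⁻¹ *
        ∑ J : Fin b → Fin n,
          ⟪batchGrad g J (w + ρ • batchGrad g J w), fullGrad g w⟫ := by
  have : NeZero n := ⟨hn.ne'⟩
  have : NeZero b := ⟨Nat.one_le_iff_ne_zero.mp hb⟩
  simpa [fullGrad_eq_expect, batchGrad_eq_expect, expect_eq_real_smul_sum (E := ℝ), hβ.le] using
    msam_stochastic_alignment_general (κ := Fin b) ℓ g hg hLip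
      (by simpa [fullGrad_eq_expect, expect_eq_real_smul_sum (E := ℝ)] using hvar w) hρ
end
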